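/- Let K be an algebraically closed field of characteristic 0 and let f and g be nonconstant, relatively prime polynomials in K[t]. Let A, B ∈ K[t] satisfy either (A, B) = (f² − g², 2fg) or (A, B) = (2fg, f² − g²), and set C = f² + g². Let w ∈ K[t] be a nonzero polynomial. If A is nonconstant of even degree, then wA + (wB)² ≠ (wC)³. -/

import Mathlib

open Polynomial

/-!
An elliptic curve is not rational, so in characteristic zero it has no nonconstant polynomial
points. More generally, let `v ^ n = p(u)` with `p` separable and `n`, `deg p` at least `2`. Then
`v` is coprime to `p'(u)`, so `n v ^ (n - 1) v' = p'(u) u'` forces `v ^ (n - 1)` to divide `u'`. If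
`u' ≠ 0`, this gives `(n - 1) deg v < deg u`, which is incompatible with `n deg v = deg p deg u`.

If `A ^ 2 + B ^ 2 = C ^ 2` and `w A + (w B) ^ 2 = (w C) ^ 3`, then eliminating `B` shows that
`(-w C, -w A)` lies on the elliptic curve `y ^ 2 + y = x ^ 3 + x ^ 2` of discriminant `-43`, so
`w A` is constant.
-/

section Superelliptic

variable {R : Type*} [CommRing R] [IsDomain R] {p u v : R[X]} {n : ℕ}

theorem derivative_eq_zero_of_pow_eq_comp (hp : p.Separable) (hdeg : 2 ≤ p.natDegree)
    (hn : 2 ≤ n) (h : v ^ n = p.comp u) : derivative u = 0 := by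
  by_contra hu'
  have hcop : IsCoprime (v ^ (n - 1)) ((derivative p).comp u) := by
    have hpu : IsCoprime (p.comp u) ((derivative p).comp u) :=
      IsCoprime.map hp (compRingHom u)
    rw [← h, IsCoprime.pow_left_iff (by omega)] at hpu
    exact hpu.pow_left
  have hderiv : v ^ (n - 1) * (C (n : R) * derivative v) =
      (derivative p).comp u * derivative u := by
    have := congrArg derivative h
    rw [derivative_pow, derivative_comp] at this
    linear_combination this
  have hdvd : v ^ (n - 1) ∣ derivative u := hcop.dvd_of_dvd_mul_left ⟨_, hderiv.symm⟩
  have hlt : (n - 1) * v.natDegree < u.natDegree := by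
    rw [← natDegree_pow]
    refine (natDegree_le_of_dvd hdvd hu').trans_lt (natDegree_derivative_lt fun hu => hu' ?_)
    exact derivative_of_natDegree_zero hu
  have hdegs : n * v.natDegree = p.natDegree * u.natDegree := by
    rw [← natDegree_pow, h, natDegree_comp]
  have hle : 2 * u.natDegree ≤ 2 * ((n - 1) * v.natDegree) :=
    calc 2 * u.natDegree
      _ ≤ p.natDegree * u.natDegree := by gcongr
      _ = n * v.natDegree := hdegs.symm
      _ ≤ 2 * (n - 1) * v.natDegree := by gcongr; omega
      _ = 2 * ((n - 1) * v.natDegree) := mul_assoc ..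
  omega

theorem natDegree_eq_zero_of_pow_eq_comp [CharZero R] (hp : p.Separable) (hdeg : 2 ≤ p.natDegree)
    (hn : 2 ≤ n) (h : v ^ n = p.comp u) : u.natDegree = 0 ∧ v.natDegree = 0 := by
  have hu : u.natDegree = 0 :=
    derivative_eq_zero.mp (derivative_eq_zero_of_pow_eq_comp hp hdeg hn h)
  have hv : n * v.natDegree = 0 := by
    rw [← natDegree_pow, h, natDegree_comp, hu, mul_zero]
  exact ⟨hu, (Nat.mul_eq_zero.mp hv).resolve_left (by omega)⟩

end Superelliptic

theorem cubic_separable_of_discr_ne_zero {K : Type*} [Field K] {P : Cubic K} (ha : P.a ≠ 0)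
    (hd : P.discr ≠ 0) : P.toPoly.Separable := by
  have hsplits := IsAlgClosed.splits (P.toPoly.map (algebraMap K (AlgebraicClosure K)))
  rw [← nodup_aroots_iff_of_splits (Cubic.ne_zero_of_a_ne_zero ha) hsplits, aroots_def,
    ← Cubic.map_roots]
  exact (Cubic.discr_ne_zero_iff_roots_nodup ha hsplits).mp hd

theorem sq_eq_twoTorsionPolynomial_comp {R : Type*} [CommRing R] {W : WeierstrassCurve R}
    {x y : R[X]} (h : (W.map C).toAffine.Equation x y) :
    (2 * y + C W.a₁ * x + C W.a₃) ^ 2 = W.twoTorsionPolynomial.toPoly.comp x := by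
  rw [WeierstrassCurve.Affine.equation_iff] at h
  simp only [WeierstrassCurve.map_a₁, WeierstrassCurve.map_a₂, WeierstrassCurve.map_a₃,
    WeierstrassCurve.map_a₄, WeierstrassCurve.map_a₆] at h
  simp only [WeierstrassCurve.twoTorsionPolynomial, Cubic.toPoly, WeierstrassCurve.b₂,
    WeierstrassCurve.b₄, WeierstrassCurve.b₆, add_comp, mul_comp, pow_comp, C_comp, X_comp,
    ofNat_comp, map_add, map_mul, map_pow, map_ofNat]
  linear_combination 4 * h

theorem natDegree_eq_zero_of_weierstrassCurve_equation {K : Type*} [Field K] [CharZero K]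
    (W : WeierstrassCurve K) [W.IsElliptic] {x y : K[X]} (h : (W.map C).toAffine.Equation x y) :
    x.natDegree = 0 ∧ y.natDegree = 0 := by
  have ha : W.twoTorsionPolynomial.a ≠ 0 := OfNat.ofNat_ne_zero 4
  have hsep : W.twoTorsionPolynomial.toPoly.Separable :=
    cubic_separable_of_discr_ne_zero ha
      (W.twoTorsionPolynomial_discr_ne_zero_of_isElliptic (IsUnit.mk0 _ two_ne_zero))
  have hdeg : W.twoTorsionPolynomial.toPoly.natDegree = 3 := Cubic.natDegree_of_a_ne_zero ha
  obtain ⟨hx, hv⟩ := natDegree_eq_zero_of_pow_eq_comp hsep (by omega) le_rfl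
    (sq_eq_twoTorsionPolynomial_comp h)
  refine ⟨hx, ?_⟩
  obtain ⟨a, rfl⟩ := natDegree_eq_zero.mp hx
  rwa [natDegree_add_C, ← C_mul, natDegree_add_C, ← C_ofNat,
    natDegree_C_mul two_ne_zero] at hv

theorem jesmanowicz_poly_lem_1_2_3_general {K : Type*} [Field K] [CharZero K] {w A B C : K[X]}
    (hABC : A ^ 2 + B ^ 2 = C ^ 2) (hw : w ≠ 0) (hA : 0 < A.natDegree) :
    w * A + (w * B) ^ 2 ≠ (w * C) ^ 3 := by
  intro h
  let W : WeierstrassCurve K := ⟨0, 1, 1, 0, 0⟩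
  have : W.IsElliptic := by
    have hΔ : W.Δ = -43 := by
      norm_num [W, WeierstrassCurve.Δ, WeierstrassCurve.b₂, WeierstrassCurve.b₄,
        WeierstrassCurve.b₆, WeierstrassCurve.b₈]
    exact ⟨hΔ ▸ IsUnit.mk0 _ (by norm_num)⟩
  have hpoint : (W.map Polynomial.C).toAffine.Equation (-(w * C)) (-(w * A)) := by
    simp only [WeierstrassCurve.Affine.equation_iff, WeierstrassCurve.map, W, map_zero, map_one]
    linear_combination w ^ 2 * hABC - h
  have hconst : (w * A).natDegree = 0 := by
    simpa only [natDegree_neg] using (natDegree_eq_zero_of_weierstrassCurve_equation W hpoint).2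
  rw [natDegree_mul hw (ne_zero_of_natDegree_gt hA)] at hconst
  omega

theorem jesmanowicz_poly_lem_1_2_3
    {K : Type*} [Field K] [CharZero K] [IsAlgClosed K]
    (f g w A B : K[X])
    (hf : 0 < f.natDegree) (hg : 0 < g.natDegree)
    (hfg : IsCoprime f g) (hw : w ≠ 0)
    (hAB : (A = f ^ 2 - g ^ 2 ∧ B = 2 * f * g) ∨ (A = 2 * f * g ∧ B = f ^ 2 - g ^ 2))
    (hA : 0 < A.natDegree) (hAeven : Even A.natDegree) :
    w * A + (w * B) ^ 2 ≠ (w * (f ^ 2 + g ^ 2)) ^ 3 :=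
  jesmanowicz_poly_lem_1_2_3_general
    (by rcases hAB with ⟨rfl, rfl⟩ | ⟨rfl, rfl⟩ <;> ring) hw hA
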